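/- Let L = ℚ(i, √3, √6) ⊆ ℂ, let σ be the field automorphism of L that fixes K = ℚ(i, √6) and sends √3 ↦ −√3, let N(α) = α·σ(α) denote the relative norm from L to K, and let ω = (−1 + i√3)/2 (a primitive cube root of unity, with σ(ω) = ω²). Define 6×6 matrices over L: H_1 = (1/√6)·M_1 where M_1 has rows [1,1,1,1,1,1], [1, −2+√3, −1, 2−√3, −2+√3, 2−√3], [1, 1, −2−√3, 1, 1, −2+√3], [1, −2−√3, 2+√3, −1, 1, −1], [1, 1, −2−√3, −2+√3, 1, 1], [1, 1, 2+√3, −1, −2−√3, −1]; and H_2 = (1/√6)·M_2 where M_2 has rows [1,1,1,1,1,1], [1, 1, −1, −2+√3, −1, 2−√3], [1, 1, 1, 1, −2−√3, −2+√3], [1, −2−√3, 2+√3, −2−√3, 2+√3, −1], [1, 1, −2−√3, 1, 1, −2+√3], [−2−√3, 1, 2+√3, −2−√3, 2+√3, −1]. Let v_1, v_2, v_3, v_4 ∈ L^6 be the columns of (1/√6)·W where W has rows [1,1,1,1], [ω²(2−√3), −ω²(2−√3), −ω(2−√3), ω(2−√3)], [ω, ω, ω², ω²], [−ω, ω, ω²,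 −ω²], [ω², ω², ω, ω], [−1, 1, 1, −1]. Then: the columns of H_1 and the columns of H_2 each form orthonormal bases B_1 and B_2 of L^6 with respect to the σ-Hermitian form; B_0 (the computational basis), B_1 and B_2 are pairwise mutually unbiased (N(⟨b,c⟩) = 1/6 for vectors b, c from distinct bases); and v_1, v_2, v_3, v_4 are pairwise orthogonal unit vectors each mutually unbiased to every vector of B_0 ∪ B_1 ∪ B_2. -/

import Mathlib

open Finset Matrix

noncomputable section

/-- The σ-Hermitian inner product on `L^6`: `⟨u,v⟩ = ∑ j, σ(u_j)·v_j`. -/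
def hermInnerAut {L : Type*} [Field L] (σ : L ≃+* L) (u v : Fin 6 → L) : L :=
  ∑ j, σ (u j) * v j

/-- The relative norm `N(α) = α·σ(α)`. -/
def relNorm {L : Type*} [Field L] (σ : L ≃+* L) (x : L) : L := x * σ x

/-- `ω = (−1 + i√3)/2`, a primitive cube root of unity. -/
def omg {L : Type*} [Field L] (i s3 : L) : L := (-1 + i * s3) / 2

/-- The matrix `M₁` (so that `H₁ = (1/√6)·M₁`). -/
def Mone {L : Type*} [Field L] (s3 : L) : Matrix (Fin 6) (Fin 6) L :=
  !![1, 1, 1, 1, 1, 1;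
     1, -2 + s3, -1, 2 - s3, -2 + s3, 2 - s3;
     1, 1, -2 - s3, 1, 1, -2 + s3;
     1, -2 - s3, 2 + s3, -1, 1, -1;
     1, 1, -2 - s3, -2 + s3, 1, 1;
     1, 1, 2 + s3, -1, -2 - s3, -1]

/-- The matrix `M₂` (so that `H₂ = (1/√6)·M₂`). -/
def Mtwo {L : Type*} [Field L] (s3 : L) : Matrix (Fin 6) (Fin 6) L :=
  !![1, 1, 1, 1, 1, 1;
     1, 1, -1, -2 + s3, -1, 2 - s3;
     1, 1, 1, 1, -2 - s3, -2 + s3;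
     1, -2 - s3, 2 + s3, -2 - s3, 2 + s3, -1;
     1, 1, -2 - s3, 1, 1, -2 + s3;
     -2 - s3, 1, 2 + s3, -2 - s3, 2 + s3, -1]

/-- The `6 × 4` matrix `W` whose columns (scaled by `1/√6`) are the four extra vectors. -/
def Wmat {L : Type*} [Field L] (i s3 : L) : Matrix (Fin 6) (Fin 4) L :=
  !![1, 1, 1, 1;
     (omg i s3) ^ 2 * (2 - s3), -((omg i s3) ^ 2 * (2 - s3)),
       -((omg i s3) * (2 - s3)), (omg i s3) * (2 - s3);
     omg i s3, omg i s3, (omg i s3) ^ 2, (omg i s3) ^ 2;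
     -(omg i s3), omg i s3, (omg i s3) ^ 2, -((omg i s3) ^ 2);
     (omg i s3) ^ 2, (omg i s3) ^ 2, omg i s3, omg i s3;
     -1, 1, 1, -1]

/-- The `j`-th column of `(1/√6)·M` as a vector of `L^6`. -/
def col6 {L : Type*} [Field L] (s6 : L) (M : Matrix (Fin 6) (Fin 6) L) (j : Fin 6) :
    Fin 6 → L := fun r => s6⁻¹ * M r j

/-- The `j`-th column of `(1/√6)·W` as a vector of `L^6`. -/
def col4 {L : Type*} [Field L] (s6 : L) (W : Matrix (Fin 6) (Fin 4) L) (j : Fin 4) :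
    Fin 6 → L := fun r => s6⁻¹ * W r j

/-- The computational basis `B₀` of `L^6`. -/
def compBasis {L : Type*} [Field L] : Fin 6 → Fin 6 → L :=
  fun a r => if r = a then 1 else 0

/-!
Everything happens inside the subfield `ℚ(i, √3)`, which we realise as the iterated quadratic
algebra `𝕂 = ℚ(i)(√3)`: there the involution `star` of `𝕂` over `ℚ(i)` plays the part of `σ`, and
equality is decidable. Up to the factor `1/√6`, which contributes `σ(√6)·√6 = 6`, the inner
products of columns of `A` and `B` are the entries of `Aᴴ * B`. So orthonormality says
`Aᴴ * A = 6`, unbiasedness to the computational basis says that the entries of `A` are unitary, and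
mutual unbiasedness says that `z * star z = 6` for all entries `z` of `Aᴴ * B`. These are finite
computations in `𝕂`, and the embedding `𝕂 → L` carries them to `L`.
-/

section HermitianForm

variable {L : Type*} [Field L] (σ : L ≃+* L)

lemma relNorm_mul (x y : L) : relNorm σ (x * y) = relNorm σ x * relNorm σ y := by
  simp only [relNorm, map_mul, mul_mul_mul_comm]

lemma relNorm_inv (x : L) : relNorm σ x⁻¹ = (relNorm σ x)⁻¹ := by
  simp only [relNorm, map_inv₀, mul_inv]

lemma relNorm_aut (x : L) : relNorm σ (σ x) = σ (relNorm σ x) :=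
  (map_mul σ x (σ x)).symm

lemma relNorm_eq_sq {x : L} (hx : σ x = x) : relNorm σ x = x ^ 2 := by
  rw [relNorm, hx, sq]

lemma hermInnerAut_smul_smul (c : L) (u v : Fin 6 → L) :
    hermInnerAut σ (c • u) (c • v) = relNorm σ c * hermInnerAut σ u v := by
  simp only [hermInnerAut, relNorm, Pi.smul_apply, smul_eq_mul, map_mul, Finset.mul_sum]
  exact Finset.sum_congr rfl fun _ _ ↦ by ring

lemma hermInnerAut_compBasis_left (a : Fin 6) (v : Fin 6 → L) :
    hermInnerAut σ (compBasis a) v = v a := by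
  simp [hermInnerAut, compBasis, apply_ite σ]

lemma hermInnerAut_compBasis_right (v : Fin 6 → L) (a : Fin 6) :
    hermInnerAut σ v (compBasis a) = σ (v a) := by
  simp [hermInnerAut, compBasis]

lemma col6_eq_smul_col (s : L) (M : Matrix (Fin 6) (Fin 6) L) (j : Fin 6) :
    col6 s M j = s⁻¹ • M.col j := rfl

lemma col4_eq_smul_col (s : L) (M : Matrix (Fin 6) (Fin 4) L) (j : Fin 4) :
    col4 s M j = s⁻¹ • M.col j := rfl

end HermitianForm

section HadamardMatrices

variable {R m n k : Type*} [CommRing R] [StarRing R] [Fintype m]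

/-- The rectangular analogue of `Matrix.IsHadamard`: all entries are unitary and the columns are
pairwise orthogonal. After division by the square root of the number of rows, the columns become
an orthonormal family which is unbiased to the standard basis. -/
structure IsPartialHadamard [DecidableEq n] (A : Matrix m n R) : Prop where
  apply_mul_star (r : m) (j : n) : A r j * star (A r j) = 1
  conjTranspose_mul : Aᴴ * A = (Fintype.card m : R) • 1

/-- Unnormalised mutual unbiasedness of the columns of `A` and the columns of `B`. Both families
still have to be divided by the square root of the number of rows, which turns the value
`Fintype.card m` of the norms of the inner products into `1 / Fintype.card m`. -/
def IsMutuallyUnbiased (A : Matrix m n R) (B : Matrix m k R) : Prop :=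
  ∀ a b, (Aᴴ * B) a b * star ((Aᴴ * B) a b) = Fintype.card m

end HadamardMatrices

section BaseChange

variable {L R n k : Type*} [Field L] {σ : L ≃+* L} [CommRing R] [StarRing R] {φ : R →+* L}
  (hφ : ∀ x, σ (φ x) = φ (star x)) {s : L} (hs : relNorm σ s = 6)
  {A : Matrix (Fin 6) n R} {B : Matrix (Fin 6) k R}

include hφ

lemma relNorm_map (x : R) : relNorm σ (φ x) = φ (x * star x) := by
  rw [relNorm, hφ, map_mul]

lemma hermInnerAut_map_col (a : n) (b : k) :
    hermInnerAut σ ((A.map φ).col a) ((B.map φ).col b) = φ ((Aᴴ * B) a b) := by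
  simp only [hermInnerAut, col_apply, map_apply, hφ, mul_apply, conjTranspose_apply, map_sum,
    map_mul]

include hs

lemma hermInnerAut_inv_smul_map_col (a : n) (b : k) :
    hermInnerAut σ (s⁻¹ • (A.map φ).col a) (s⁻¹ • (B.map φ).col b) = 6⁻¹ * φ ((Aᴴ * B) a b) := by
  rw [hermInnerAut_smul_smul, relNorm_inv, hs, hermInnerAut_map_col hφ]

lemma IsPartialHadamard.hermInnerAut_eq_ite [DecidableEq n] (h_six : (6 : L) ≠ 0)
    (hA : IsPartialHadamard A) (a b : n) :
    hermInnerAut σ (s⁻¹ • (A.map φ).col a) (s⁻¹ • (A.map φ).col b) = if a = b then 1 else 0 := by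
  rw [hermInnerAut_inv_smul_map_col hφ hs, hA.conjTranspose_mul]
  simp [one_apply, apply_ite φ, map_ofNat φ, h_six]

lemma IsPartialHadamard.relNorm_inv_smul_map [DecidableEq n] (hA : IsPartialHadamard A)
    (r : Fin 6) (j : n) : relNorm σ ((s⁻¹ • (A.map φ).col j) r) = 6⁻¹ := by
  rw [Pi.smul_apply, smul_eq_mul, relNorm_mul, relNorm_inv, hs, col_apply, map_apply,
    relNorm_map hφ, hA.apply_mul_star, map_one, mul_one]

lemma IsPartialHadamard.relNorm_compBasis_left [DecidableEq n] (hA : IsPartialHadamard A)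
    (r : Fin 6) (j : n) :
    relNorm σ (hermInnerAut σ (compBasis r) (s⁻¹ • (A.map φ).col j)) = 6⁻¹ := by
  rw [hermInnerAut_compBasis_left, hA.relNorm_inv_smul_map hφ hs]

lemma IsPartialHadamard.relNorm_compBasis_right [DecidableEq n] (hA : IsPartialHadamard A)
    (j : n) (r : Fin 6) :
    relNorm σ (hermInnerAut σ (s⁻¹ • (A.map φ).col j) (compBasis r)) = 6⁻¹ := by
  rw [hermInnerAut_compBasis_right, relNorm_aut, hA.relNorm_inv_smul_map hφ hs, map_inv₀,
    map_ofNat]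

lemma IsMutuallyUnbiased.relNorm_hermInnerAut (hAB : IsMutuallyUnbiased A B) (a : n) (b : k) :
    relNorm σ (hermInnerAut σ (s⁻¹ • (A.map φ).col a) (s⁻¹ • (B.map φ).col b)) = 6⁻¹ := by
  have h_inv : σ 6⁻¹ = 6⁻¹ := by rw [map_inv₀, map_ofNat]
  calc
    _ = (6⁻¹ : L) ^ 2 * φ (Fintype.card (Fin 6)) := by
      rw [hermInnerAut_inv_smul_map_col hφ hs, relNorm_mul, relNorm_eq_sq σ h_inv,
        relNorm_map hφ, hAB a b]
    _ = 6⁻¹ * 6 * 6⁻¹ := by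
      rw [map_natCast, Fintype.card_fin, Nat.cast_ofNat, sq, mul_right_comm]
    _ = 6⁻¹ := by simpa using mul_inv_mul_cancel (6⁻¹ : L)

end BaseChange

section QuadraticLift

variable {R A : Type*} [CommRing R] [CommRing A] {a b : R} {f : R →+* A} {u : A}

/-- The ring homomorphism out of the quadratic algebra `R[X] / (X² - b X - a)` which extends a ring
homomorphism `f` and sends the class of `X` to `u`. It is `QuadraticAlgebra.lift` without a fixed
`R`-algebra structure on the target. -/
def quadraticLift (f : R →+* A) (u : A) (hu : u * u = f a + f b * u) :
    QuadraticAlgebra R a b →+* A :=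
  letI := f.toAlgebra
  (QuadraticAlgebra.lift ⟨u, by simpa [Algebra.smul_def, RingHom.algebraMap_toAlgebra] using hu⟩ :
    QuadraticAlgebra R a b →ₐ[R] A).toRingHom

variable {hu : u * u = f a + f b * u} (g : A →+* A) (hf : ∀ r, g (f r) = f r)

lemma quadraticLift_apply (z : QuadraticAlgebra R a b) :
    quadraticLift f u hu z = f z.re + f z.im * u := by
  let := f.toAlgebra
  simp [quadraticLift, Algebra.smul_def, RingHom.algebraMap_toAlgebra]

include hf

lemma map_quadraticLift_of_fixed (hgu : g u = u) (z : QuadraticAlgebra R a b) :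
    g (quadraticLift f u hu z) = quadraticLift f u hu z := by
  simp only [quadraticLift_apply, map_add, map_mul, hf, hgu]

lemma map_quadraticLift_of_conj (hgu : g u = f b - u) (z : QuadraticAlgebra R a b) :
    g (quadraticLift f u hu z) = quadraticLift f u hu (star z) := by
  simp only [quadraticLift_apply, map_add, map_mul, map_neg, hf, hgu, QuadraticAlgebra.re_star,
    QuadraticAlgebra.im_star]
  ring

end QuadraticLift

/-- The field `ℚ(i)`, as a quadratic algebra so that equality is decidable by computation. -/
abbrev GaussianRat : Type := QuadraticAlgebra ℚ (-1) 0

instance GaussianRat.fact_sq_ne : Fact (∀ r : ℚ, r ^ 2 ≠ -1 + 0 * r) :=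
  ⟨fun r ↦ by nlinarith [sq_nonneg r]⟩

lemma GaussianRat.sq_ne_three (z : GaussianRat) : z ^ 2 ≠ 3 := by
  intro h
  have hre : z.re * z.re - z.im * z.im = 3 := by
    simpa [sq, sub_eq_add_neg, QuadraticAlgebra.re_ofNat] using congrArg QuadraticAlgebra.re h
  have him : z.re * z.im + z.im * z.re = 0 := by
    simpa [sq, QuadraticAlgebra.im_ofNat] using congrArg QuadraticAlgebra.im h
  rcases mul_eq_zero.mp (show z.re * z.im = 0 by linarith) with h0 | h0
  · rw [h0] at hre
    nlinarith [mul_self_nonneg z.im]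
  · have : ¬ IsSquare (3 : ℚ) := by decide +kernel
    exact this ⟨z.re, by rw [h0] at hre; linarith⟩

/-- The field `ℚ(i, √3) = ℚ(ζ₁₂)`, built as a quadratic algebra over `ℚ(i)`, so that `star` is the
automorphism fixing `i` and sending `√3` to `-√3`. -/
abbrev TwelfthCyclotomic : Type := QuadraticAlgebra GaussianRat 3 0

namespace TwelfthCyclotomic

open QuadraticAlgebra

instance fact_sq_ne : Fact (∀ z : GaussianRat, z ^ 2 ≠ 3 + 0 * z) :=
  ⟨fun z ↦ by simpa using z.sq_ne_three⟩

/-- The imaginary unit of `ℚ(i, √3)`. -/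
def I : TwelfthCyclotomic := ⟨omega, 0⟩

/-- The square root of `3` in `ℚ(i, √3)`. -/
def sqrtThree : TwelfthCyclotomic := omega

lemma isPartialHadamard_Mone : IsPartialHadamard (Mone sqrtThree) :=
  ⟨by decide +kernel, by decide +kernel⟩

lemma isPartialHadamard_Mtwo : IsPartialHadamard (Mtwo sqrtThree) :=
  ⟨by decide +kernel, by decide +kernel⟩

lemma isPartialHadamard_Wmat : IsPartialHadamard (Wmat I sqrtThree) :=
  ⟨by decide +kernel, by decide +kernel⟩

lemma isMutuallyUnbiased_Mone_Mtwo : IsMutuallyUnbiased (Mone sqrtThree) (Mtwo sqrtThree) := by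
  unfold IsMutuallyUnbiased
  decide +kernel

lemma isMutuallyUnbiased_Wmat_Mone : IsMutuallyUnbiased (Wmat I sqrtThree) (Mone sqrtThree) := by
  unfold IsMutuallyUnbiased
  decide +kernel

lemma isMutuallyUnbiased_Wmat_Mtwo : IsMutuallyUnbiased (Wmat I sqrtThree) (Mtwo sqrtThree) := by
  unfold IsMutuallyUnbiased
  decide +kernel

variable {L : Type*} [Field L] [CharZero L] {i s : L} (hi : i ^ 2 = -1) (hs : s ^ 2 = 3)

/-- The embedding of `ℚ(i, √3)` into a field of characteristic zero determined by a square root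
`i` of `-1` and a square root `s` of `3`. -/
def embedding : TwelfthCyclotomic →+* L :=
  quadraticLift (quadraticLift (Rat.castHom L) i (by simpa [sq] using hi)) s
    (by simpa [sq, map_ofNat] using hs)

lemma embedding_I : embedding hi hs I = i := by
  simp [embedding, quadraticLift_apply, I]

lemma embedding_sqrtThree : embedding hi hs sqrtThree = s := by
  simp [embedding, quadraticLift_apply, sqrtThree]

lemma map_embedding {σ : L ≃+* L} (hσi : σ i = i) (hσs : σ s = -s) (x : TwelfthCyclotomic) :
    σ (embedding hi hs x) = embedding hi hs (star x) := by
  refine map_quadraticLift_of_conj σ.toRingHom (fun z ↦ ?_) (by simpa using hσs) x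
  exact map_quadraticLift_of_fixed σ.toRingHom (fun q ↦ map_ratCast σ q) hσi z

end TwelfthCyclotomic

section Naturality

variable {K L : Type*} [Field K] [Field L] (φ : K →+* L) (i s : K)

lemma Mone_map : (Mone s).map φ = Mone (φ s) := by
  ext r j
  fin_cases r <;> fin_cases j <;> simp [Mone, map_ofNat φ]

lemma Mtwo_map : (Mtwo s).map φ = Mtwo (φ s) := by
  ext r j
  fin_cases r <;> fin_cases j <;> simp [Mtwo, map_ofNat φ]

lemma map_omg : φ (omg i s) = omg (φ i) (φ s) := by
  simp [omg, map_ofNat φ]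

lemma Wmat_map : (Wmat i s).map φ = Wmat (φ i) (φ s) := by
  ext r j
  fin_cases r <;> fin_cases j <;> simp [Wmat, map_omg, map_ofNat φ]

end Naturality

open TwelfthCyclotomic in
theorem stmt13_general {L : Type*} [Field L] [CharZero L] {i s3 s6 : L}
    (hi : i ^ 2 = -1) (h3 : s3 ^ 2 = 3) (h6 : s6 ^ 2 = 6)
    (σ : L ≃+* L) (hσi : σ i = i) (hσ6 : σ s6 = s6) (hσ3 : σ s3 = -s3) :
    (∀ a b : Fin 6, hermInnerAut σ (col6 s6 (Mone s3) a) (col6 s6 (Mone s3) b)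
        = if a = b then 1 else 0)
    ∧ (∀ a b : Fin 6, hermInnerAut σ (col6 s6 (Mtwo s3) a) (col6 s6 (Mtwo s3) b)
        = if a = b then 1 else 0)
    ∧ (∀ a b : Fin 6,
        relNorm σ (hermInnerAut σ (compBasis a) (col6 s6 (Mone s3) b)) = (6 : L)⁻¹)
    ∧ (∀ a b : Fin 6,
        relNorm σ (hermInnerAut σ (compBasis a) (col6 s6 (Mtwo s3) b)) = (6 : L)⁻¹)
    ∧ (∀ a b : Fin 6,
        relNorm σ (hermInnerAut σ (col6 s6 (Mone s3) a) (col6 s6 (Mtwo s3) b)) = (6 : L)⁻¹)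
    ∧ (∀ a b : Fin 4, hermInnerAut σ (col4 s6 (Wmat i s3) a) (col4 s6 (Wmat i s3) b)
        = if a = b then 1 else 0)
    ∧ (∀ (a : Fin 4) (b : Fin 6),
        relNorm σ (hermInnerAut σ (col4 s6 (Wmat i s3) a) (compBasis b)) = (6 : L)⁻¹
        ∧ relNorm σ (hermInnerAut σ (col4 s6 (Wmat i s3) a) (col6 s6 (Mone s3) b))
            = (6 : L)⁻¹
        ∧ relNorm σ (hermInnerAut σ (col4 s6 (Wmat i s3) a) (col6 s6 (Mtwo s3) b))
            = (6 : L)⁻¹) := by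
  have hφ := map_embedding hi h3 hσi hσ3
  have hs : relNorm σ s6 = 6 := by rw [relNorm_eq_sq σ hσ6, h6]
  have h_six : (6 : L) ≠ 0 := OfNat.ofNat_ne_zero 6
  have hM₁ := Mone_map (embedding hi h3) sqrtThree
  have hM₂ := Mtwo_map (embedding hi h3) sqrtThree
  have hW := Wmat_map (embedding hi h3) I sqrtThree
  rw [embedding_sqrtThree] at hM₁ hM₂ hW
  rw [embedding_I] at hW
  simp only [← hM₁, ← hM₂, ← hW, col6_eq_smul_col, col4_eq_smul_col]
  exact ⟨isPartialHadamard_Mone.hermInnerAut_eq_ite hφ hs h_six,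
    isPartialHadamard_Mtwo.hermInnerAut_eq_ite hφ hs h_six,
    isPartialHadamard_Mone.relNorm_compBasis_left hφ hs,
    isPartialHadamard_Mtwo.relNorm_compBasis_left hφ hs,
    isMutuallyUnbiased_Mone_Mtwo.relNorm_hermInnerAut hφ hs,
    isPartialHadamard_Wmat.hermInnerAut_eq_ite hφ hs h_six,
    fun a b ↦ ⟨isPartialHadamard_Wmat.relNorm_compBasis_right hφ hs a b,
      isMutuallyUnbiased_Wmat_Mone.relNorm_hermInnerAut hφ hs a b,
      isMutuallyUnbiased_Wmat_Mtwo.relNorm_hermInnerAut hφ hs a b⟩⟩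

/-- In `L = ℚ(i, √3, √6)` with σ the automorphism fixing
`K = ℚ(i, √6)` and sending `√3 ↦ −√3`, the columns of `H₁ = (1/√6)M₁` and
`H₂ = (1/√6)M₂` form orthonormal bases `B₁`, `B₂` of `L^6`; `B₀`, `B₁`, `B₂` are pairwise
mutually unbiased (`N(⟨b,c⟩) = 1/6` for vectors from distinct bases); and the four columns
of `(1/√6)W` are pairwise orthogonal unit vectors, each mutually unbiased to every vector
of `B₀ ∪ B₁ ∪ B₂`. -/
theorem stmt13 (L : Type) [Field L] [CharZero L] (i s3 s6 : L)
    (hi : i ^ 2 = -1) (h3 : s3 ^ 2 = 3) (h6 : s6 ^ 2 = 6)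
    (hgen : Subfield.closure ({i, s3, s6} : Set L) = ⊤)
    (σ : L ≃+* L) (hσi : σ i = i) (hσ6 : σ s6 = s6) (hσ3 : σ s3 = -s3) :
    (∀ a b : Fin 6, hermInnerAut σ (col6 s6 (Mone s3) a) (col6 s6 (Mone s3) b)
        = if a = b then 1 else 0)
    ∧ (∀ a b : Fin 6, hermInnerAut σ (col6 s6 (Mtwo s3) a) (col6 s6 (Mtwo s3) b)
        = if a = b then 1 else 0)
    ∧ (∀ a b : Fin 6,
        relNorm σ (hermInnerAut σ (compBasis a) (col6 s6 (Mone s3) b)) = (6 : L)⁻¹)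
    ∧ (∀ a b : Fin 6,
        relNorm σ (hermInnerAut σ (compBasis a) (col6 s6 (Mtwo s3) b)) = (6 : L)⁻¹)
    ∧ (∀ a b : Fin 6,
        relNorm σ (hermInnerAut σ (col6 s6 (Mone s3) a) (col6 s6 (Mtwo s3) b)) = (6 : L)⁻¹)
    ∧ (∀ a b : Fin 4, hermInnerAut σ (col4 s6 (Wmat i s3) a) (col4 s6 (Wmat i s3) b)
        = if a = b then 1 else 0)
    ∧ (∀ (a : Fin 4) (b : Fin 6),
        relNorm σ (hermInnerAut σ (col4 s6 (Wmat i s3) a) (compBasis b)) = (6 : L)⁻¹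
        ∧ relNorm σ (hermInnerAut σ (col4 s6 (Wmat i s3) a) (col6 s6 (Mone s3) b))
            = (6 : L)⁻¹
        ∧ relNorm σ (hermInnerAut σ (col4 s6 (Wmat i s3) a) (col6 s6 (Mtwo s3) b))
            = (6 : L)⁻¹) := by
  exact stmt13_general hi h3 h6 σ hσi hσ6 hσ3

end
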